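/- arXiv:2404.05404 — 2 statements merged into one kernel-verified Lean document; each statement's English description precedes it below -/
import Mathlib

section
/- Recursive feasibility across a mode switch (Theorem 1, Case 2): let C ⊆ S be control invariant for (A, B, U), let d ∈ ℕ, and suppose x₁ ∈ B^d_{A,B,U}(S, C). Then for every N ≥ d there exist inputs u : Fin N → (Fin nu → ℝ) with u i ∈ U and states x' : Fin (N+1) → (Fin nx → ℝ) with x' 0 = x₁ and x' (i+1) = A.mulVec (x' i) + B.mulVec (u i), such that x' i ∈ S for all 1 ≤ i ≤ d and x' i ∈ C for all d ≤ i ≤ N. -/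
open Matrix

/-- Backward reachable set of `I` within `S` for the system `x⁺ = A x + B u`, `u ∈ U`. -/
def brs {nx nu : ℕ} (A : Matrix (Fin nx) (Fin nx) ℝ) (B : Matrix (Fin nx) (Fin nu) ℝ)
    (U : Set (Fin nu → ℝ)) (S I : Set (Fin nx → ℝ)) : Set (Fin nx → ℝ) :=
  {x ∈ S | ∃ u ∈ U, A.mulVec x + B.mulVec u ∈ I}

/-- `i`-step backward reachable set. -/
def brsIter {nx nu : ℕ} (A : Matrix (Fin nx) (Fin nx) ℝ) (B : Matrix (Fin nx) (Fin nu) ℝ)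
    (U : Set (Fin nu → ℝ)) (S : Set (Fin nx → ℝ)) : ℕ → Set (Fin nx → ℝ) → Set (Fin nx → ℝ)
  | 0, I => I
  | i + 1, I => brs A B U S (brsIter A B U S i I)

/-- `C` is control invariant for the system `x⁺ = A x + B u`, `u ∈ U`. -/
def ctrlInv {nx nu : ℕ} (A : Matrix (Fin nx) (Fin nx) ℝ) (B : Matrix (Fin nx) (Fin nu) ℝ)
    (U : Set (Fin nu → ℝ)) (C : Set (Fin nx → ℝ)) : Prop :=
  ∀ x ∈ C, ∃ u ∈ U, A.mulVec x + B.mulVec u ∈ C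

theorem recursive_feasibility_mode_switch {nx nu : ℕ} (A : Matrix (Fin nx) (Fin nx) ℝ)
    (B : Matrix (Fin nx) (Fin nu) ℝ) (U : Set (Fin nu → ℝ)) (S C : Set (Fin nx → ℝ))
    (hC : ctrlInv A B U C) (hCS : C ⊆ S) (d : ℕ) (x₁ : Fin nx → ℝ)
    (hx₁ : x₁ ∈ brsIter A B U S d C) :
    ∀ N : ℕ, d ≤ N →
      ∃ (u : Fin N → (Fin nu → ℝ)) (x' : Fin (N + 1) → (Fin nx → ℝ)),
        (∀ i : Fin N, u i ∈ U) ∧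
        x' 0 = x₁ ∧
        (∀ i : Fin N, x' i.succ = A.mulVec (x' i.castSucc) + B.mulVec (u i)) ∧
        (∀ i : Fin (N + 1), 1 ≤ (i : ℕ) → (i : ℕ) ≤ d → x' i ∈ S) ∧
        (∀ i : Fin (N + 1), d ≤ (i : ℕ) → (i : ℕ) ≤ N → x' i ∈ C) := by
  intro N hN
  have step : ∀ (k : ℕ) (x : Fin nx → ℝ), ∃ u, x ∈ brsIter A B U S k C →
      u ∈ U ∧ A.mulVec x + B.mulVec u ∈ brsIter A B U S (k - 1) C := by
    intro k x
    by_cases hx : x ∈ brsIter A B U S k C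
    · cases k with
      | zero =>
        obtain ⟨u, hu, h⟩ := hC x hx
        exact ⟨u, fun _ => ⟨hu, h⟩⟩
      | succ k =>
        obtain ⟨_, u, hu, h⟩ := hx
        exact ⟨u, fun _ => ⟨hu, h⟩⟩
    · exact ⟨0, fun h => absurd h hx⟩
  choose f hf using step
  let X : ℕ → (Fin nx → ℝ) := fun n =>
    Nat.rec x₁ (fun i x => A.mulVec x + B.mulVec (f (d - i) x)) n
  have hX : ∀ i, X i ∈ brsIter A B U S (d - i) C := by
    intro i
    induction i with
    | zero => exact hx₁
    | succ i ih => exact (hf (d - i) (X i) ih).2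
  have hS : ∀ k, brsIter A B U S k C ⊆ S := by
    intro k
    cases k with
    | zero => exact hCS
    | succ k => exact fun x hx => hx.1
  refine ⟨fun i => f (d - i) (X i), fun i => X i, fun i => (hf _ _ (hX i)).1, rfl,
    fun i => rfl, fun i _ _ => hS _ (hX i), fun i hi _ => ?_⟩
  have h := hX i
  rw [Nat.sub_eq_zero_of_le hi] at h
  exact h
end

section
/- One-step cost decrease of the shifted candidate solution (key inequality in the proof of Theorem 2): let A : Matrix (Fin n) (Fin n) ℝ, B : Matrix (Fin n) (Fin m) ℝ, K : Matrix (Fin m) (Fin n) ℝ, and symmetric matrices Q̄, P : Matrix (Fin n) (Fin n) ℝ, R : Matrix (Fin m) (Fin m) ℝ such that P − (A + B*K)ᵀ * P * (A + B*K) − Q̄ − Kᵀ*R*K is positive semidefinite. Let (x_s, u_s) be a steady pair, i.e. x_s = A.mulVec x_s + B.mulVec u_s. For N ≥ 1, let u : Fin N → (Fin m → ℝ) and x : Fin (N+1) → (Fin n → ℝ) satisfy x (i+1) = A.mulVec (x i) + B.mulVec (u i). Define the cost J(x, u) := ∑_{i < N} [ (x i − x_s) ⬝ᵥ (Q̄.mulVec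 (x i − x_s)) + (u i − u_s) ⬝ᵥ (R.mulVec (u i − u_s)) ] + (x N − x_s) ⬝ᵥ (P.mulVec (x N − x_s)). Define the shifted candidate by u' i := u (i+1) for i < N − 1 and u' (N−1) := u_s + K.mulVec (x N − x_s), with states x' 0 := x 1 and x' (i+1) := A.mulVec (x' i) + B.mulVec (u' i). Then J(x', u') ≤ J(x, u) − (x 0 − x_s) ⬝ᵥ (Q̄.mulVec (x 0 − x_s)) − (u 0 − u_s) ⬝ᵥ (R.mulVec (u 0 − u_s)). -/
open Matrix

theorem shifted_candidate_cost_decrease {n m : ℕ}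
    (A : Matrix (Fin n) (Fin n) ℝ) (B : Matrix (Fin n) (Fin m) ℝ)
    (K : Matrix (Fin m) (Fin n) ℝ)
    (Qm P : Matrix (Fin n) (Fin n) ℝ) (R : Matrix (Fin m) (Fin m) ℝ)
    (hQsym : Qm.IsSymm) (hPsym : P.IsSymm) (hRsym : R.IsSymm)
    (hPSD : (P - (A + B * K)ᵀ * P * (A + B * K) - Qm - Kᵀ * R * K).PosSemidef)
    (xs : Fin n → ℝ) (us : Fin m → ℝ)
    (hsteady : xs = A.mulVec xs + B.mulVec us)
    (N : ℕ) (hN : 1 ≤ N)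
    (u : Fin N → (Fin m → ℝ)) (x : Fin (N + 1) → (Fin n → ℝ))
    (hdyn : ∀ i : Fin N, x i.succ = A.mulVec (x i.castSucc) + B.mulVec (u i))
    (u' : Fin N → (Fin m → ℝ)) (x' : Fin (N + 1) → (Fin n → ℝ))
    (hu' : ∀ (i : Fin N) (h : (i : ℕ) + 1 < N), u' i = u ⟨(i : ℕ) + 1, h⟩)
    (hu'last : u' ⟨N - 1, by omega⟩ = us + K.mulVec (x (Fin.last N) - xs))
    (hx'0 : x' 0 = x 1)
    (hdyn' : ∀ i : Fin N, x' i.succ = A.mulVec (x' i.castSucc) + B.mulVec (u' i)) :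
    (∑ i : Fin N, ((x' i.castSucc - xs) ⬝ᵥ (Qm.mulVec (x' i.castSucc - xs)) +
        (u' i - us) ⬝ᵥ (R.mulVec (u' i - us)))) +
      (x' (Fin.last N) - xs) ⬝ᵥ (P.mulVec (x' (Fin.last N) - xs)) ≤
    ((∑ i : Fin N, ((x i.castSucc - xs) ⬝ᵥ (Qm.mulVec (x i.castSucc - xs)) +
        (u i - us) ⬝ᵥ (R.mulVec (u i - us)))) +
      (x (Fin.last N) - xs) ⬝ᵥ (P.mulVec (x (Fin.last N) - xs)))
      - (x 0 - xs) ⬝ᵥ (Qm.mulVec (x 0 - xs))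
      - (u ⟨0, by omega⟩ - us) ⬝ᵥ (R.mulVec (u ⟨0, by omega⟩ - us)) := by
  obtain ⟨M, rfl⟩ : ∃ M, N = M + 1 := ⟨N - 1, by omega⟩
  have hx : ∀ k (hk : k < M + 1), x' ⟨k, by omega⟩ = x ⟨k + 1, by omega⟩ := by
    intro k
    induction k with
    | zero => intro _; exact hx'0
    | succ k ih =>
      intro hk
      have h1 := hdyn' ⟨k, by omega⟩
      have h2 := hdyn ⟨k + 1, hk⟩
      rw [hu' ⟨k, by omega⟩ hk] at h1
      have h3 := ih (by omega)
      simp only [Fin.succ_mk, Fin.castSucc_mk] at h1 h2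
      rw [h1, h2, h3]
  have hxs : ∀ i : Fin (M + 1), x' i.castSucc = x i.succ := fun i => hx i i.2
  have hus : ∀ i : Fin M, u' i.castSucc = u i.succ := fun i =>
    hu' i.castSucc (by simp)
  have hul : u' (Fin.last M) = us + K.mulVec (x (Fin.last (M + 1)) - xs) := hu'last
  have hxl : x' (Fin.last (M + 1)) - xs
      = (A + B * K).mulVec (x (Fin.last (M + 1)) - xs) := by
    have h := hdyn' (Fin.last M)
    rw [hxs, hul, Fin.succ_last] at h
    rw [h, Matrix.add_mulVec, ← Matrix.mulVec_mulVec, Matrix.mulVec_add,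
      Matrix.mulVec_sub A]
    have hA : A.mulVec xs = xs - B.mulVec us := eq_sub_of_add_eq hsteady.symm
    rw [hA]
    abel
  have hq := hPSD.dotProduct_mulVec_nonneg (x (Fin.last (M + 1)) - xs)
  rw [Fin.sum_univ_castSucc, Fin.sum_univ_succ (n := M)]
  simp only [hxs, hus, hul, hxl, Fin.succ_last, Fin.succ_castSucc, add_sub_cancel_left]
  have e0 : (⟨0, by omega⟩ : Fin (M + 1)) = 0 := rfl
  rw [e0, Fin.castSucc_zero]
  generalize x (Fin.last (M + 1)) - xs = z at *
  have t : ∀ {k : ℕ} (C : Matrix (Fin k) (Fin n) ℝ) (S : Matrix (Fin k) (Fin k) ℝ),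
      z ⬝ᵥ ((Cᵀ * S * C).mulVec z) = (C.mulVec z) ⬝ᵥ (S.mulVec (C.mulVec z)) := by
    intro k C S
    rw [← Matrix.mulVec_mulVec, ← Matrix.mulVec_mulVec, Matrix.dotProduct_mulVec,
      Matrix.vecMul_transpose]
  simp only [star_trivial, Matrix.sub_mulVec, dotProduct_sub, t] at hq
  linarith
end
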